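/- Let (α, μ) be a σ-finite measure space and f : α → α a measurable bijection with measurable inverse which preserves μ. Let D : ℕ → Set α be a monotone increasing sequence of measurable sets with μ(D n) < ∞ for every n and with ⋃ₙ D n = α. Suppose there exists a strictly increasing sequence of indices n₁ < n₂ < ... such that μ({x ∈ D n_k : ∀ j ≥ 1, f^[j](x) ∉ D n_k}) → 0 as k → ∞. Then f is conservative with respect to μ: for every measurable set S, μ-almost every x ∈ S satisfies f^[j](x) ∈ S for some integer j ≥ 1. -/

import Mathlib

open MeasureTheory Function Set Filter

/-!
Let `W` be a wandering set and `B` a set of finite measure. Pulling `W ∩ f⁻ʲ B` back to time `n`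
gives `f⁻⁽ⁿ⁻ʲ⁾ W ∩ f⁻ⁿ B`; for `j ≤ n` these are disjoint subsets of `f⁻ⁿ B`, so the orbits starting
in `W` visit `B` with total measure at most `μ B`. Hence almost every point of `W` visits `B` only
finitely often (Borel–Cantelli), and if it starts in `B`, its last visit is to the nonreturning part
`N` of `B`. Bounding the visits to `N` in the same way yields `μ (W ∩ B) ≤ μ N`, and letting `B`
exhaust the space gives `μ W = 0`.
-/

section Orbits

variable {α : Type*} {f : α → α} {s W : Set α} {x : α}

/-- The nonreturning part of `s`: the points of `s` whose forward orbit never comes back to `s`. -/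
def nonreturningPart (f : α → α) (s : Set α) : Set α :=
  {x ∈ s | ∀ j : ℕ, 1 ≤ j → f^[j] x ∉ s}

/-- A wandering set: one whose preimages under distinct iterates of `f` are disjoint. For
a nonsingular map, conservativity is the absence of wandering sets of positive measure. -/
def IsWandering (f : α → α) (W : Set α) : Prop :=
  Pairwise (Disjoint on fun n : ℕ => f^[n] ⁻¹' W)

theorem isWandering_of_forall_iterate_notMem (h : ∀ x ∈ W, ∀ m ≠ 0, f^[m] x ∉ W) :
    IsWandering f W := by
  refine (pairwise_disjoint_on _).2 fun i j hij => disjoint_left.2 fun x hi hj => ?_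
  refine h (f^[i] x) hi (j - i) (Nat.sub_ne_zero_of_lt hij) ?_
  rwa [← iterate_add_apply, Nat.sub_add_cancel hij.le]

theorem exists_iterate_mem_nonreturningPart (hne : {j : ℕ | f^[j] x ∈ s}.Nonempty)
    (hfin : {j : ℕ | f^[j] x ∈ s}.Finite) : ∃ j : ℕ, f^[j] x ∈ nonreturningPart f s := by
  obtain ⟨last, hlast⟩ := hfin.exists_maximal hne
  refine ⟨last, hlast.prop, fun j hj hmem => ?_⟩
  rw [← iterate_add_apply] at hmem
  exact hlast.not_prop_of_gt (Nat.lt_add_of_pos_left hj) hmem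

end Orbits

section Measure

variable {α : Type*} [MeasurableSpace α] {μ : Measure α} {f : α → α} {s B W : Set α}

theorem nullMeasurableSet_nonreturningPart (hf : Measure.QuasiMeasurePreserving f μ μ)
    (hs : NullMeasurableSet s μ) : NullMeasurableSet (nonreturningPart f s) μ := by
  have heq : nonreturningPart f s = s ∩ ⋂ j : ℕ, ⋂ _ : 1 ≤ j, (f^[j] ⁻¹' s)ᶜ := by
    ext x
    simp [nonreturningPart]
  rw [heq]
  exact hs.inter <| .iInter fun j => .iInter fun _ => (hs.preimage (hf.iterate j)).compl

theorem IsWandering.tsum_measure_inter_preimage_iterate_le (hW : IsWandering f W)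
    (hf : MeasurePreserving f μ μ) (hWm : NullMeasurableSet W μ) (hB : NullMeasurableSet B μ) :
    ∑' j : ℕ, μ (W ∩ f^[j] ⁻¹' B) ≤ μ B := by
  have hpre {t : Set α} (ht : NullMeasurableSet t μ) (m : ℕ) : NullMeasurableSet (f^[m] ⁻¹' t) μ :=
    ht.preimage (hf.iterate m).quasiMeasurePreserving
  refine ENNReal.tsum_le_of_sum_range_le fun n => ?_
  have hpull : ∀ j ∈ Finset.range n,
      μ (W ∩ f^[j] ⁻¹' B) = μ (f^[n - j] ⁻¹' W ∩ f^[n] ⁻¹' B) := by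
    intro j hj
    have hjn : j + (n - j) = n := Nat.add_sub_cancel' (Finset.mem_range.1 hj).le
    rw [← (hf.iterate (n - j)).measure_preimage (hWm.inter (hpre hB j)), preimage_inter,
      ← preimage_comp, ← iterate_add, hjn]
  have hdisj : (Finset.range n : Set ℕ).Pairwise
      (AEDisjoint μ on fun j => f^[n - j] ⁻¹' W ∩ f^[n] ⁻¹' B) := by
    intro i hi j hj hij
    rw [Finset.mem_coe, Finset.mem_range] at hi hj
    exact (hW (by lia : n - i ≠ n - j)).aedisjoint.mono inter_subset_left inter_subset_left
  calc ∑ j ∈ Finset.range n, μ (W ∩ f^[j] ⁻¹' B)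
      = ∑ j ∈ Finset.range n, μ (f^[n - j] ⁻¹' W ∩ f^[n] ⁻¹' B) := Finset.sum_congr rfl hpull
    _ = μ (⋃ j ∈ Finset.range n, f^[n - j] ⁻¹' W ∩ f^[n] ⁻¹' B) :=
      (measure_biUnion_finset₀ hdisj fun j _ => (hpre hWm (n - j)).inter (hpre hB n)).symm
    _ ≤ μ (f^[n] ⁻¹' B) := measure_mono (iUnion₂_subset fun _ _ => inter_subset_right)
    _ = μ B := (hf.iterate n).measure_preimage hB

theorem IsWandering.measure_inter_le_measure_nonreturningPart (hW : IsWandering f W)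
    (hf : MeasurePreserving f μ μ) (hWm : NullMeasurableSet W μ) (hB : NullMeasurableSet B μ)
    (hBfin : μ B ≠ ⊤) : μ (W ∩ B) ≤ μ (nonreturningPart f B) := by
  have hfinite : ∀ᵐ x ∂μ, {j : ℕ | x ∈ W ∩ f^[j] ⁻¹' B}.Finite :=
    ae_finite_setOfPred_mem
      ((hW.tsum_measure_inter_preimage_iterate_le hf hWm hB).trans_lt hBfin.lt_top).ne
  have hlast : (W ∩ B : Set α) ≤ᵐ[μ] ⋃ j : ℕ, W ∩ f^[j] ⁻¹' nonreturningPart f B := by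
    filter_upwards [hfinite] with x hx hxWB
    obtain ⟨j, hj⟩ := exists_iterate_mem_nonreturningPart ⟨0, hxWB.2⟩
      (hx.subset fun i hi => ⟨hxWB.1, hi⟩)
    exact mem_iUnion.2 ⟨j, hxWB.1, hj⟩
  calc μ (W ∩ B) ≤ μ (⋃ j : ℕ, W ∩ f^[j] ⁻¹' nonreturningPart f B) := measure_mono_ae hlast
    _ ≤ ∑' j : ℕ, μ (W ∩ f^[j] ⁻¹' nonreturningPart f B) := measure_iUnion_le _
    _ ≤ μ (nonreturningPart f B) := hW.tsum_measure_inter_preimage_iterate_le hf hWm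
      (nullMeasurableSet_nonreturningPart hf.quasiMeasurePreserving hB)

theorem aecover_of_monotone_of_iUnion_eq_univ {ι : Type*} [Preorder ι] {D : ι → Set α}
    (hmono : Monotone D) (hmeas : ∀ i, MeasurableSet (D i)) (hcover : ⋃ i, D i = univ) :
    AECover μ atTop D where
  ae_eventually_mem := ae_of_all μ fun x => by
    obtain ⟨i, hi⟩ := mem_iUnion.1 (hcover.symm ▸ mem_univ x)
    exact (eventually_ge_atTop i).mono fun j hij => hmono hij hi
  measurableSet := hmeas

theorem tendsto_measure_inter_of_aecover {ι : Type*} {l : Filter ι} [l.IsCountablyGenerated]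
    {D : ι → Set α} (hD : AECover μ l D) (s : Set α) :
    Tendsto (fun i => μ (s ∩ D i)) l (nhds (μ s)) := by
  have h := (hD.restrict (s := s)).lintegral_tendsto_of_countably_generated (f := 1)
    aemeasurable_const
  simpa [Measure.restrict_apply (hD.measurableSet _), inter_comm] using h

theorem windtree_conservative_of_vanishing_nonreturning_general {ι : Type*} {l : Filter ι}
    [l.NeBot] [l.IsCountablyGenerated] (hf : MeasurePreserving f μ μ) {D : ι → Set α}
    (hD : AECover μ l D) (hfin : ∀ᶠ i in l, μ (D i) ≠ ⊤)
    (hlim : Tendsto (fun i => μ (nonreturningPart f (D i))) l (nhds 0)) :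
    Conservative f μ := by
  refine ⟨hf.quasiMeasurePreserving, fun W hWm hpos => ?_⟩
  by_contra! hnoreturn
  have hW : IsWandering f W := isWandering_of_forall_iterate_notMem hnoreturn
  have hle : ∀ᶠ i in l, μ (W ∩ D i) ≤ μ (nonreturningPart f (D i)) := hfin.mono fun i hi =>
    hW.measure_inter_le_measure_nonreturningPart hf hWm.nullMeasurableSet
      (hD.measurableSet i).nullMeasurableSet hi
  exact hpos <| nonpos_iff_eq_zero.1 <|
    le_of_tendsto_of_tendsto (tendsto_measure_inter_of_aecover hD W) hlim hle

end Measure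

/-- Let `f` be a measure-preserving measurable bijection of a σ-finite
measure space, and let `D n` be an increasing exhausting sequence of finite-measure
measurable sets.  If along some strictly increasing subsequence the measure of the
nonreturning part of `D (ns k)` tends to `0`, then `f` is conservative: for every
measurable set `S`, μ-a.e. point of `S` returns to `S`. -/
theorem windtree_conservative_of_vanishing_nonreturning
    {α : Type*} [MeasurableSpace α] (μ : Measure α) [SigmaFinite μ]
    (f : α ≃ᵐ α) (hf : MeasurePreserving f μ μ)
    (D : ℕ → Set α) (hmono : Monotone D) (hmeas : ∀ n, MeasurableSet (D n))
    (hfin : ∀ n, μ (D n) < ⊤) (hcover : ⋃ n, D n = Set.univ)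
    (ns : ℕ → ℕ) (hns : StrictMono ns)
    (hlim : Tendsto
      (fun k => μ {x ∈ D (ns k) | ∀ j : ℕ, 1 ≤ j → (⇑f)^[j] x ∉ D (ns k)})
      atTop (nhds 0)) :
    ∀ S : Set α, MeasurableSet S →
      ∀ᵐ x ∂μ, x ∈ S → ∃ j : ℕ, 1 ≤ j ∧ (⇑f)^[j] x ∈ S := by
  intro S hS
  have hD : AECover μ atTop fun k => D (ns k) :=
    (aecover_of_monotone_of_iUnion_eq_univ hmono hmeas hcover).comp_tendsto hns.tendsto_atTop
  have hcons : Conservative f μ := windtree_conservative_of_vanishing_nonreturning_general hf hD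
    (.of_forall fun k => (hfin (ns k)).ne) hlim
  filter_upwards [hcons.ae_mem_imp_frequently_image_mem hS.nullMeasurableSet] with x hx hxS
  exact frequently_atTop.1 (hx hxS) 1
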